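/- Let G be a finite group, N a normal subgroup of G, and π^N : G → Aut⁺(C(G/N)) the positive representation defined by π^N_s e_{tN} = e_{stN}. Let ρ be a band irreducible positive representation of G in a nonzero finite dimensional Archimedean Riesz space E that is linearly equivalent to π^N, i.e., there exists an invertible linear map T : E → C(G/N) with T ∘ ρ_s = π^N_s ∘ T for all s ∈ G. Then ρ is order equivalent to π^N, i.e., such an intertwiner T can be chosen to be a lattice isomorphism. -/

import Mathlib

/-- A (Riesz) ideal of an ordered real vector space: a submodule `I` such that
`|x| ≤ |y|` and `y ∈ I` imply `x ∈ I`. -/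
def IsRieszIdeal {E : Type*} [AddCommGroup E] [Lattice E] [Module ℝ E]
    (I : Submodule ℝ E) : Prop :=
  ∀ x y : E, |x| ≤ |y| → y ∈ I → x ∈ I

/-- A band: an ideal closed under suprema of its subsets (when they exist in `E`). -/
def IsBand {E : Type*} [AddCommGroup E] [Lattice E] [Module ℝ E]
    (B : Submodule ℝ E) : Prop :=
  IsRieszIdeal B ∧ ∀ (D : Set E) (x : E), D ⊆ (B : Set E) → IsLUB D x → x ∈ B

/-- The disjoint complement of a set `D`. -/
def disjComplement {E : Type*} [AddCommGroup E] [Lattice E] (D : Set E) : Set E :=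
  {x : E | ∀ y ∈ D, |x| ⊓ |y| = 0}

/-- A projection band: a band `B` with `E = B ⊕ Bᵈ`. -/
def IsProjectionBand {E : Type*} [AddCommGroup E] [Lattice E] [Module ℝ E]
    (B : Submodule ℝ E) : Prop :=
  IsBand B ∧ ∀ x : E, ∃ y ∈ B, ∃ z ∈ disjComplement (B : Set E), x = y + z

/-- An order direct sum decomposition `E = L ⊕ M`: every element decomposes uniquely
as a sum of an element of `L` and an element of `M`, and an element is positive iff
both its components are positive. -/
def IsOrderDecomposition {E : Type*} [AddCommGroup E] [Lattice E] [Module ℝ E]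
    (L M : Submodule ℝ E) : Prop :=
  (∀ x : E, ∃ y ∈ L, ∃ z ∈ M, x = y + z) ∧
  (∀ x : E, x ∈ L → x ∈ M → x = 0) ∧
  (∀ y z : E, y ∈ L → z ∈ M → (0 ≤ y + z ↔ 0 ≤ y ∧ 0 ≤ z))

/-- A homomorphism `ρ : G →* (E ≃ₗ[ℝ] E)` is a positive representation when each
`ρ s` is an order isomorphism (hence a lattice automorphism). -/
def IsPositiveRep {E : Type*} [AddCommGroup E] [Lattice E] [Module ℝ E]
    {G : Type*} [Group G] (ρ : G →* (E ≃ₗ[ℝ] E)) : Prop :=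
  ∀ (s : G) (x y : E), x ≤ y ↔ ρ s x ≤ ρ s y

/-- A submodule is `ρ`-invariant if it is mapped into itself by every `ρ s`. -/
def InvariantSubmodule {E : Type*} [AddCommGroup E] [Lattice E] [Module ℝ E]
    {G : Type*} [Group G] (ρ : G →* (E ≃ₗ[ℝ] E)) (B : Submodule ℝ E) : Prop :=
  ∀ (s : G), ∀ x ∈ B, ρ s x ∈ B

/-- `ρ` is order indecomposable if the only `ρ`-invariant order direct sum
decompositions `E = L ⊕ M` are the trivial ones. -/
def OrderIndecomposable {E : Type*} [AddCommGroup E] [Lattice E] [Module ℝ E]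
    {G : Type*} [Group G] (ρ : G →* (E ≃ₗ[ℝ] E)) : Prop :=
  ∀ L M : Submodule ℝ E, IsOrderDecomposition L M →
    InvariantSubmodule ρ L → InvariantSubmodule ρ M → L = ⊥ ∨ L = ⊤

/-- `ρ` is projection band irreducible if the only `ρ`-invariant projection bands
are `{0}` and `E`. -/
def ProjectionBandIrreducible {E : Type*} [AddCommGroup E] [Lattice E] [Module ℝ E]
    {G : Type*} [Group G] (ρ : G →* (E ≃ₗ[ℝ] E)) : Prop :=
  ∀ B : Submodule ℝ E, IsProjectionBand B → InvariantSubmodule ρ B → B = ⊥ ∨ B = ⊤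


/-- `ρ` is band irreducible if the only `ρ`-invariant bands are `{0}` and `E`. -/
def BandIrreducible {E : Type*} [AddCommGroup E] [Lattice E] [Module ℝ E]
    {G : Type*} [Group G] (ρ : G →* (E ≃ₗ[ℝ] E)) : Prop :=
  ∀ B : Submodule ℝ E, IsBand B → InvariantSubmodule ρ B → B = ⊥ ∨ B = ⊤

/-- `E` is Archimedean: if `0 ≤ n • x ≤ y` for all positive integers `n`, then `x = 0`. -/
def RieszArchimedean (E : Type*) [AddCommGroup E] [Lattice E] [Module ℝ E] : Prop :=
  ∀ x y : E, (∀ n : ℕ, 0 < n → 0 ≤ n • x ∧ n • x ≤ y) → x = 0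

/-- The lattice automorphism of `C(G/H) = (G ⧸ H → ℝ)` given by left translation
by `s`; it maps the basis vector `e_{tH}` to `e_{stH}`. -/
noncomputable def cosetShift {G : Type*} [Group G] (H : Subgroup G) (s : G) :
    (G ⧸ H → ℝ) ≃ₗ[ℝ] (G ⧸ H → ℝ) where
  toFun f := fun c => f (s⁻¹ • c)
  invFun f := fun c => f (s • c)
  map_add' _ _ := rfl
  map_smul' _ _ := rfl
  left_inv f := funext fun c => by simp [smul_smul]
  right_inv f := funext fun c => by simp [smul_smul]

/-- The canonical positive representation `π^H` of `G` on `C(G/H)`, with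
`π^H_s e_{tH} = e_{stH}`. -/
noncomputable def cosetRep (G : Type*) [Group G] (H : Subgroup G) :
    G →* ((G ⧸ H → ℝ) ≃ₗ[ℝ] (G ⧸ H → ℝ)) where
  toFun s := cosetShift H s
  map_one' := by
    apply LinearEquiv.toLinearMap_injective
    ext f c
    simp [cosetShift]
  map_mul' s t := by
    apply LinearEquiv.toLinearMap_injective
    ext f c
    simp [cosetShift, mul_smul]

/-! A nonzero finite dimensional Archimedean Riesz space has an atom `u`: a positive vector whose
disjoint complement is as large as possible. If `N` acts trivially, the orbit of `u` is indexed by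
`G ⧸ N`. Its disjoint complement is an invariant band that does not contain `u`, hence is zero by
irreducibility, and splitting off multiples of the orbit's atoms one at a time then shows that the
orbit spans. As the dimension is the index of `N`, the orbit is a basis. A basis of atoms identifies
the order with the coordinatewise one, and this basis is permuted by `G` as the cosets are. -/

section LatticeOrderedGroup

lemma inf_eq_zero_of_nonneg_of_le {E : Type*} [AddCommGroup E] [Lattice E] {a b u : E}
    (ha : 0 ≤ a) (hab : a ≤ b) (h : b ⊓ u = 0) : a ⊓ u = 0 :=
  le_antisymm ((inf_le_inf_right u hab).trans h.le) (le_inf ha (h.ge.trans inf_le_right))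

variable {E : Type*} [AddCommGroup E] [Lattice E] [IsOrderedAddMonoid E]

lemma add_inf_le_inf_add_inf {a b u : E} (ha : 0 ≤ a) (hb : 0 ≤ b) (hu : 0 ≤ u) :
    (a + b) ⊓ u ≤ a ⊓ u + b ⊓ u := by
  rw [add_inf, inf_add, inf_add]
  refine le_inf (le_inf inf_le_left ?_) (le_inf ?_ ?_)
  · exact inf_le_right.trans (le_add_of_nonneg_right hb)
  · exact inf_le_right.trans (le_add_of_nonneg_left ha)
  · exact inf_le_right.trans (le_add_of_nonneg_left hu)

lemma add_inf_eq_zero {a b u : E} (ha : a ⊓ u = 0) (hb : b ⊓ u = 0) : (a + b) ⊓ u = 0 := by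
  have ha₀ : 0 ≤ a := ha.ge.trans inf_le_left
  have hb₀ : 0 ≤ b := hb.ge.trans inf_le_left
  have hu₀ : 0 ≤ u := ha.ge.trans inf_le_right
  refine le_antisymm ?_ (le_inf (add_nonneg ha₀ hb₀) hu₀)
  calc (a + b) ⊓ u ≤ a ⊓ u + b ⊓ u := add_inf_le_inf_add_inf ha₀ hb₀ hu₀
    _ = 0 := by rw [ha, hb, add_zero]

lemma nsmul_inf_eq_zero {a u : E} (h : a ⊓ u = 0) (n : ℕ) : (n • a) ⊓ u = 0 := by
  induction n with
  | zero => rw [zero_nsmul]; exact inf_eq_left.2 (h.ge.trans inf_le_right)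
  | succ n ih => rw [succ_nsmul]; exact add_inf_eq_zero ih h

lemma eq_zero_of_abs_eq_zero {a : E} (h : |a| = 0) : a = 0 :=
  le_antisymm ((le_abs_self a).trans h.le) (neg_nonpos.1 ((neg_le_abs a).trans h.le))

lemma posPart_le_abs (a : E) : a⁺ ≤ |a| :=
  sup_le (le_abs_self a) (abs_nonneg a)

lemma eq_zero_of_isLUB_empty {x : E} (hx : IsLUB ∅ x) : x = 0 :=
  have hbot : IsBot x := isLUB_empty_iff.1 hx
  le_antisymm (hbot 0) (nonneg_of_le_add_right (hbot (x + x)))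

lemma posPart_inf_eq_zero_of_isLUB {D : Set E} {x v : E} (hx : IsLUB D x) (hv : 0 ≤ v)
    (hD : ∀ d ∈ D, d⁺ ⊓ v = 0) : x⁺ ⊓ v = 0 := by
  -- With `w = x⁺ ⊓ v`, disjointness turns `d⁺ ⊔ w ≤ x⁺` into `d⁺ + w ≤ x⁺`, so `x⁺ - w` is
  -- still an upper bound of `D`.
  set w := x⁺ ⊓ v
  have hw : 0 ≤ w := le_inf (posPart_nonneg x) hv
  have hub : x⁺ - w ∈ upperBounds D := by
    intro d hd
    have hdw : d⁺ ⊓ w = 0 := by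
      rw [inf_comm]
      exact inf_eq_zero_of_nonneg_of_le hw inf_le_right (inf_comm d⁺ v ▸ hD d hd)
    refine (le_posPart d).trans (le_sub_iff_add_le.2 ?_)
    calc d⁺ + w = d⁺ ⊔ w := by rw [← inf_add_sup, hdw, zero_add]
      _ ≤ x⁺ := sup_le (posPart_mono (hx.1 hd)) inf_le_left
  have hxw : x⁺ ≤ x⁺ - w := sup_le (hx.2 hub) (sub_nonneg.2 inf_le_left)
  exact le_antisymm (nonpos_of_add_le_right (le_sub_iff_add_le.1 hxw)) hw

end LatticeOrderedGroup

section RieszAtom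

variable {E : Type*} [AddCommGroup E] [Lattice E] [Module ℝ E]

/-- An atom of a Riesz space: a nonzero positive vector whose order interval `[0, u]` consists of
multiples of `u`. It is not an `IsAtom` of the order: `(1 / 2) • u` lies strictly between `0` and
`u`. -/
structure IsRieszAtom (u : E) : Prop where
  pos : 0 < u
  exists_eq_smul : ∀ y : E, 0 ≤ y → y ≤ u → ∃ c : ℝ, y = c • u

lemma IsRieszAtom.inf_eq_zero_of_linearIndependent {u v : E} (hu : IsRieszAtom u)
    (hv : IsRieszAtom v) (huv : LinearIndependent ℝ ![u, v]) : u ⊓ v = 0 := by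
  have hinf : 0 ≤ u ⊓ v := le_inf hu.pos.le hv.pos.le
  obtain ⟨s, hs⟩ := hu.exists_eq_smul _ hinf inf_le_left
  obtain ⟨t, ht⟩ := hv.exists_eq_smul _ hinf inf_le_right
  have hs₀ : s = 0 := (LinearIndependent.pair_iff.1 huv s (-t)
    (by rw [neg_smul, ← hs, ← ht, add_neg_cancel])).1
  rw [hs, hs₀, zero_smul]

end RieszAtom

section RieszSpace

variable {E : Type*} [AddCommGroup E] [Lattice E] [IsOrderedAddMonoid E] [Module ℝ E]

lemma IsRieszIdeal.mem_of_nonneg_of_le {I : Submodule ℝ E} (hI : IsRieszIdeal I) {x y : E}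
    (hx : 0 ≤ x) (hxy : x ≤ y) (hy : y ∈ I) : x ∈ I :=
  hI x y (abs_le_abs_of_nonneg hx hxy) hy

variable [IsOrderedModule ℝ E]

lemma abs_smul_le_smul_abs {c r : ℝ} (hcr : |c| ≤ r) (x : E) : |c • x| ≤ r • |x| := by
  have hle : ∀ t : ℝ, t • x ≤ |t| • |x| := by
    intro t
    rcases abs_cases t with ⟨ht, ht₀⟩ | ⟨ht, ht₀⟩ <;> rw [ht]
    · exact smul_le_smul_of_nonneg_left (le_abs_self x) ht₀
    · rw [← neg_smul_neg t x]
      exact smul_le_smul_of_nonneg_left (neg_le_abs x) (neg_pos.2 ht₀).le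
  calc |c • x| ≤ |c| • |x| := abs_le'.2 ⟨hle c, by simpa only [neg_smul, abs_neg] using hle (-c)⟩
    _ ≤ r • |x| := smul_le_smul_of_nonneg_right hcr (abs_nonneg x)

/-- The disjoint complement `Dᵈ` as a linear subspace, so that it can be compared with the bands
of the space. -/
def disjComplementSubmodule (D : Set E) : Submodule ℝ E where
  carrier := disjComplement D
  zero_mem' u _ := by simp
  add_mem' {x y} hx hy u hu :=
    inf_eq_zero_of_nonneg_of_le (abs_nonneg _) (abs_add_le x y)
      (add_inf_eq_zero (hx u hu) (hy u hu))
  smul_mem' c x hx u hu := by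
    obtain ⟨n, hn⟩ := exists_nat_ge |c|
    refine inf_eq_zero_of_nonneg_of_le (abs_nonneg _) (abs_smul_le_smul_abs hn x) ?_
    rw [Nat.cast_smul_eq_nsmul]
    exact nsmul_inf_eq_zero (hx u hu) n

lemma mem_disjComplementSubmodule {D : Set E} {x : E} :
    x ∈ disjComplementSubmodule D ↔ ∀ u ∈ D, |x| ⊓ |u| = 0 :=
  Iff.rfl

lemma mem_disjComplementSubmodule_singleton {x u : E} :
    x ∈ disjComplementSubmodule {u} ↔ |x| ⊓ |u| = 0 := by
  simp [mem_disjComplementSubmodule]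

lemma mem_disjComplementSubmodule_singleton_of_nonneg {x u : E} (hx : 0 ≤ x) (hu : 0 ≤ u) :
    x ∈ disjComplementSubmodule {u} ↔ x ⊓ u = 0 := by
  rw [mem_disjComplementSubmodule_singleton, abs_of_nonneg hx, abs_of_nonneg hu]

lemma mem_disjComplementSubmodule_singleton_comm {x u : E} :
    x ∈ disjComplementSubmodule {u} ↔ u ∈ disjComplementSubmodule {x} := by
  simp only [mem_disjComplementSubmodule_singleton, inf_comm]

lemma eq_zero_of_mem_disjComplementSubmodule {D : Set E} {x : E}
    (hx : x ∈ disjComplementSubmodule D) (hxD : x ∈ D) : x = 0 := by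
  have hself := hx x hxD
  rw [inf_idem] at hself
  exact eq_zero_of_abs_eq_zero hself

lemma isRieszIdeal_disjComplementSubmodule (D : Set E) :
    IsRieszIdeal (disjComplementSubmodule D) :=
  fun _ _ hxy hy u hu => inf_eq_zero_of_nonneg_of_le (abs_nonneg _) hxy (hy u hu)

lemma isBand_disjComplementSubmodule (D : Set E) : IsBand (disjComplementSubmodule D) := by
  refine ⟨isRieszIdeal_disjComplementSubmodule D, fun S x hS hx => ?_⟩
  rcases S.eq_empty_or_nonempty with rfl | ⟨d, hd⟩
  · rw [eq_zero_of_isLUB_empty hx]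
    exact zero_mem _
  have hpos : x⁺ ∈ disjComplementSubmodule D := fun u hu => by
    rw [abs_of_nonneg (posPart_nonneg x)]
    exact posPart_inf_eq_zero_of_isLUB hx (abs_nonneg u) fun s hs =>
      inf_eq_zero_of_nonneg_of_le (posPart_nonneg s) (posPart_le_abs s) (hS hs u hu)
  have hneg : x⁻ ∈ disjComplementSubmodule D := by
    refine isRieszIdeal_disjComplementSubmodule D _ d ?_ (hS hd)
    rw [abs_of_nonneg (negPart_nonneg x)]
    exact (negPart_anti (hx.1 hd)).trans (sup_le (neg_le_abs d) (abs_nonneg d))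
  simpa only [posPart_sub_negPart] using sub_mem hpos hneg

lemma nonneg_of_nonneg_smul_add {u z : E} {c : ℝ} (hu : 0 < u)
    (hz : z ∈ disjComplementSubmodule {u}) (h : 0 ≤ c • u + z) : 0 ≤ c := by
  by_contra! hc
  have hle : (-c) • u ≤ z := by rwa [neg_smul, neg_le_iff_add_nonneg']
  have hmem : (-c) • u ∈ disjComplementSubmodule {u} :=
    (isRieszIdeal_disjComplementSubmodule _).mem_of_nonneg_of_le
      (smul_nonneg (neg_pos.2 hc).le hu.le) hle hz
  rw [Submodule.smul_mem_iff _ (neg_ne_zero.2 hc.ne)] at hmem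
  exact hu.ne' (eq_zero_of_mem_disjComplementSubmodule hmem rfl)

lemma RieszArchimedean.le_of_forall_pos_le_add_smul (harch : RieszArchimedean E) {x y u : E}
    (h : ∀ ε : ℝ, 0 < ε → y ≤ x + ε • u) : y ≤ x := by
  have hzero : (y - x)⁺ = 0 := by
    refine harch _ u⁺ fun n hn => ⟨nsmul_nonneg (posPart_nonneg _) n, ?_⟩
    have hn' : (0 : ℝ) < n := Nat.cast_pos.2 hn
    rw [← Nat.cast_smul_eq_nsmul ℝ, ← le_inv_smul_iff_of_pos hn']
    refine sup_le ?_ (smul_nonneg (inv_pos.2 hn').le (posPart_nonneg u))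
    calc y - x ≤ (n : ℝ)⁻¹ • u := sub_le_iff_le_add'.2 (h _ (inv_pos.2 hn'))
      _ ≤ (n : ℝ)⁻¹ • u⁺ := smul_le_smul_of_nonneg_left (le_posPart u) (inv_pos.2 hn').le
  exact sub_nonpos.1 (posPart_eq_zero.1 hzero)

lemma RieszArchimedean.exists_isGreatest_smul_le (harch : RieszArchimedean E) {u x : E}
    (hu : 0 < u) (hx : 0 ≤ x) : ∃ c : ℝ, IsGreatest {t : ℝ | t • u ≤ x} c := by
  have hne : {t : ℝ | t • u ≤ x}.Nonempty := ⟨0, by simpa using hx⟩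
  have hbdd : BddAbove {t : ℝ | t • u ≤ x} := by
    by_contra hnb
    refine hu.not_ge (harch.le_of_forall_pos_le_add_smul (u := x) fun ε hε => ?_)
    obtain ⟨t, ht, hlt⟩ := not_bddAbove_iff.1 hnb ε⁻¹
    rw [zero_add, ← inv_smul_le_iff_of_pos hε]
    exact (smul_le_smul_of_nonneg_right hlt.le hu.le).trans ht
  refine ⟨sSup _, harch.le_of_forall_pos_le_add_smul (u := u) fun ε hε => ?_,
    fun t ht => le_csSup hbdd ht⟩
  obtain ⟨t, ht, hlt⟩ := exists_lt_of_lt_csSup hne (sub_lt_self _ hε)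
  calc sSup {t : ℝ | t • u ≤ x} • u ≤ (t + ε) • u :=
        smul_le_smul_of_nonneg_right (sub_lt_iff_lt_add.1 hlt).le hu.le
    _ = t • u + ε • u := add_smul t ε u
    _ ≤ x + ε • u := add_le_add_left ht _

lemma isRieszAtom_of_forall_disjComplementSubmodule_le (harch : RieszArchimedean E) {u : E}
    (hu : 0 < u) (hmax : ∀ v : E, 0 < v → v ≤ u →
      disjComplementSubmodule {v} ≤ disjComplementSubmodule {u}) :
    IsRieszAtom u := by
  refine ⟨hu, fun y hy hyu => ?_⟩
  obtain ⟨c, hcy, hc⟩ := harch.exists_isGreatest_smul_le hu hy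
  have hc₀ : 0 ≤ c := hc (by simpa using hy)
  refine ⟨c, (harch.le_of_forall_pos_le_add_smul (u := u) fun ε hε => ?_).antisymm hcy⟩
  rw [← add_smul]
  by_contra hnle
  -- Otherwise `z⁺ ≠ 0`, so maximality makes `z⁻` disjoint from `u`, and `z⁻ ≤ (c + ε) • u` then
  -- gives `z⁻ = 0`, against the choice of `c`.
  set z := y - (c + ε) • u
  have hcε : 0 ≤ (c + ε) • u := smul_nonneg (by positivity) hu.le
  have hzpos : 0 < z⁺ := (posPart_nonneg z).lt_of_ne' fun h =>
    hnle (sub_nonpos.1 (posPart_eq_zero.1 h))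
  have hzu : z⁺ ≤ u := sup_le ((sub_le_self y hcε).trans hyu) hu.le
  have hdisj : z⁻ ∈ disjComplementSubmodule {u} := hmax _ hzpos hzu <| by
    rw [mem_disjComplementSubmodule_singleton_of_nonneg (negPart_nonneg z) hzpos.le, inf_comm]
    exact posPart_inf_negPart_eq_zero z
  have hself : z⁻ ∈ disjComplementSubmodule {z⁻} :=
    (isRieszIdeal_disjComplementSubmodule _).mem_of_nonneg_of_le (negPart_nonneg z)
      (sup_le (by rw [neg_sub]; exact sub_le_self _ hy) hcε)
      (Submodule.smul_mem _ (c + ε) (mem_disjComplementSubmodule_singleton_comm.1 hdisj))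
  have hznonneg : 0 ≤ z :=
    negPart_eq_zero.1 (eq_zero_of_mem_disjComplementSubmodule hself rfl)
  exact (lt_add_of_pos_right c hε).not_ge (hc (sub_nonneg.1 hznonneg))

lemma exists_isRieszAtom [Nontrivial E] [FiniteDimensional ℝ E] (harch : RieszArchimedean E) :
    ∃ u : E, IsRieszAtom u := by
  obtain ⟨x, hx⟩ := exists_ne (0 : E)
  have hne : {v : E | 0 < v}.Nonempty :=
    ⟨|x|, (abs_nonneg x).lt_of_ne' (mt eq_zero_of_abs_eq_zero hx)⟩
  obtain ⟨_, ⟨u, hu, rfl⟩, hmax⟩ := wellFounded_gt.has_min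
    ((fun v : E => disjComplementSubmodule {v}) '' {v | 0 < v}) (hne.image _)
  refine ⟨u, isRieszAtom_of_forall_disjComplementSubmodule_le harch hu fun v hv hvu => ?_⟩
  have hanti : disjComplementSubmodule {u} ≤ disjComplementSubmodule {v} := fun w hw =>
    mem_disjComplementSubmodule_singleton_comm.1 <|
      (isRieszIdeal_disjComplementSubmodule _).mem_of_nonneg_of_le hv.le hvu
        (mem_disjComplementSubmodule_singleton_comm.1 hw)
  exact (eq_of_le_of_not_lt hanti (hmax _ ⟨v, hv, rfl⟩)).ge

lemma IsRieszAtom.exists_smul_le_inf_eq_zero (harch : RieszArchimedean E) {u x : E}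
    (hu : IsRieszAtom u) (hx : 0 ≤ x) :
    ∃ c : ℝ, 0 ≤ c ∧ c • u ≤ x ∧ (x - c • u) ⊓ u = 0 := by
  obtain ⟨c, hcx, hc⟩ := harch.exists_isGreatest_smul_le hu.pos hx
  refine ⟨c, hc (by simpa using hx), hcx, ?_⟩
  have hinf : 0 ≤ (x - c • u) ⊓ u := le_inf (sub_nonneg.2 hcx) hu.pos.le
  obtain ⟨t, ht⟩ := hu.exists_eq_smul _ hinf inf_le_right
  have htc : (t + c) • u ≤ x := by
    rw [add_smul, ← ht, ← le_sub_iff_add_le]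
    exact inf_le_left
  have ht₀ : t ≤ 0 := by simpa using hc htc
  exact le_antisymm (ht ▸ smul_nonpos_of_nonpos_of_nonneg ht₀ hu.pos.le) hinf

lemma exists_sub_mem_span_and_inf_eq_zero (harch : RieszArchimedean E) {S : Set E}
    (hfin : S.Finite) (hS : ∀ u ∈ S, IsRieszAtom u) {x : E} (hx : 0 ≤ x) :
    ∃ y, 0 ≤ y ∧ x - y ∈ Submodule.span ℝ S ∧ ∀ u ∈ S, y ⊓ u = 0 := by
  induction S, hfin using Set.Finite.induction_on with
  | empty => exact ⟨x, hx, by simp, by simp⟩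
  | @insert u S _ _ ih =>
    obtain ⟨y, hy, hxy, hyS⟩ := ih fun v hv => hS v (Set.mem_insert_of_mem u hv)
    have hu : IsRieszAtom u := hS u (Set.mem_insert u S)
    obtain ⟨c, hc, hcy, hcu⟩ := hu.exists_smul_le_inf_eq_zero harch hy
    refine ⟨y - c • u, sub_nonneg.2 hcy, ?_, Set.forall_mem_insert.2 ⟨hcu, fun v hv => ?_⟩⟩
    · rw [← sub_add]
      exact add_mem (Submodule.span_mono (Set.subset_insert u S) hxy)
        (Submodule.smul_mem _ c (Submodule.subset_span (Set.mem_insert u S)))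
    · exact inf_eq_zero_of_nonneg_of_le (sub_nonneg.2 hcy)
        (sub_le_self y (smul_nonneg hc hu.pos.le)) (hyS v hv)

lemma span_eq_top_of_disjComplementSubmodule_eq_bot (harch : RieszArchimedean E) {S : Set E}
    (hfin : S.Finite) (hS : ∀ u ∈ S, IsRieszAtom u) (hbot : disjComplementSubmodule S = ⊥) :
    Submodule.span ℝ S = ⊤ := by
  have hpos : ∀ x : E, 0 ≤ x → x ∈ Submodule.span ℝ S := by
    intro x hx
    obtain ⟨y, hy, hxy, hyS⟩ := exists_sub_mem_span_and_inf_eq_zero harch hfin hS hx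
    have hy₀ : y ∈ disjComplementSubmodule S := fun u hu => by
      rw [abs_of_nonneg hy, abs_of_nonneg (hS u hu).pos.le, hyS u hu]
    rw [hbot, Submodule.mem_bot] at hy₀
    rwa [hy₀, sub_zero] at hxy
  refine Submodule.eq_top_iff'.2 fun x => ?_
  rw [← posPart_sub_negPart x]
  exact sub_mem (hpos _ (posPart_nonneg x)) (hpos _ (negPart_nonneg x))

section AtomBasis

variable {ι : Type*} (b : Module.Basis ι ℝ E)

lemma sub_repr_smul_mem_disjComplementSubmodule_of_isRieszAtom
    (hb : ∀ i, IsRieszAtom (b i)) (x : E) (i : ι) :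
    x - b.repr x i • b i ∈ disjComplementSubmodule {b i} := by
  have hspan : x - b.repr x i • b i ∈ Submodule.span ℝ (b '' {i}ᶜ) := by
    rw [b.mem_span_image]
    rintro j hj rfl
    simp at hj
  refine Submodule.span_le.2 ?_ hspan
  rintro _ ⟨j, hj, rfl⟩
  rw [SetLike.mem_coe,
    mem_disjComplementSubmodule_singleton_of_nonneg (hb j).pos.le (hb i).pos.le]
  refine (hb j).inf_eq_zero_of_linearIndependent (hb i) ?_
  have hinj : Function.Injective ![j, i] := by
    simpa [Function.Injective] using ⟨hj, Ne.symm hj⟩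
  convert b.linearIndependent.comp _ hinj using 1
  ext k; fin_cases k <;> rfl

lemma nonneg_iff_repr_nonneg_of_isRieszAtom (hb : ∀ i, IsRieszAtom (b i)) (x : E) :
    0 ≤ x ↔ ∀ i, 0 ≤ b.repr x i := by
  constructor
  · intro hx i
    refine nonneg_of_nonneg_smul_add (hb i).pos
      (sub_repr_smul_mem_disjComplementSubmodule_of_isRieszAtom b hb x i) ?_
    rwa [add_sub_cancel]
  · intro h
    rw [← b.linearCombination_repr x, Finsupp.linearCombination_apply]
    exact Finset.sum_nonneg fun i _ => smul_nonneg (h i) (hb i).pos.le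

lemma le_iff_equivFun_le_of_isRieszAtom [Finite ι] (hb : ∀ i, IsRieszAtom (b i)) (x y : E) :
    x ≤ y ↔ b.equivFun x ≤ b.equivFun y := by
  rw [← sub_nonneg, nonneg_iff_repr_nonneg_of_isRieszAtom b hb,
    ← sub_nonneg (a := b.equivFun y), ← map_sub]
  rfl

end AtomBasis

end RieszSpace

section PositiveRep

variable {G E : Type*} [Group G] [AddCommGroup E] [Lattice E] [Module ℝ E]
  {ρ : G →* (E ≃ₗ[ℝ] E)}

/-- The order automorphism underlying the action of a group element under a positive
representation. -/
def IsPositiveRep.toOrderIso (hρ : IsPositiveRep ρ) (s : G) : E ≃o E where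
  toEquiv := (ρ s).toEquiv
  map_rel_iff' {x y} := (hρ s x y).symm

lemma IsPositiveRep.map_inf (hρ : IsPositiveRep ρ) (s : G) (x y : E) :
    ρ s (x ⊓ y) = ρ s x ⊓ ρ s y :=
  (hρ.toOrderIso s).map_inf x y

lemma IsPositiveRep.map_abs (hρ : IsPositiveRep ρ) (s : G) (x : E) : ρ s |x| = |ρ s x| :=
  ((hρ.toOrderIso s).map_sup x (-x)).trans (congrArg (ρ s x ⊔ ·) (map_neg (ρ s) x))

lemma IsRieszAtom.map (hρ : IsPositiveRep ρ) {u : E} (hu : IsRieszAtom u) (s : G) :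
    IsRieszAtom (ρ s u) := by
  refine ⟨?_, fun y hy hyu => ?_⟩
  · rw [← map_zero (ρ s)]
    exact (hρ.toOrderIso s).strictMono hu.pos
  · obtain ⟨x, rfl⟩ := (ρ s).surjective y
    rw [← hρ s] at hyu
    rw [← map_zero (ρ s), ← hρ s] at hy
    obtain ⟨c, rfl⟩ := hu.exists_eq_smul x hy hyu
    exact ⟨c, map_smul (ρ s) c u⟩

variable [IsOrderedAddMonoid E] [IsOrderedModule ℝ E]

lemma IsPositiveRep.invariantSubmodule_disjComplementSubmodule (hρ : IsPositiveRep ρ)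
    {S : Set E} (hS : ∀ s, ∀ u ∈ S, ρ s u ∈ S) :
    InvariantSubmodule ρ (disjComplementSubmodule S) := by
  intro s x hx u hu
  obtain ⟨v, rfl⟩ := (ρ s).surjective u
  have hv : v ∈ S := by simpa [← LinearEquiv.mul_apply, ← map_mul] using hS s⁻¹ _ hu
  rw [← hρ.map_abs, ← hρ.map_abs, ← hρ.map_inf, hx v hv, map_zero]

lemma BandIrreducible.disjComplementSubmodule_eq_bot (hirr : BandIrreducible ρ)
    (hρ : IsPositiveRep ρ) {S : Set E} (hS : ∀ s, ∀ u ∈ S, ρ s u ∈ S) {u : E} (hu : u ∈ S)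
    (hu₀ : u ≠ 0) : disjComplementSubmodule S = ⊥ :=
  (hirr _ (isBand_disjComplementSubmodule S)
    (hρ.invariantSubmodule_disjComplementSubmodule hS)).resolve_right fun htop =>
      hu₀ (eq_zero_of_mem_disjComplementSubmodule (htop ▸ Submodule.mem_top) hu)

end PositiveRep

section CosetRep

variable {G E : Type*} [Group G] [AddCommGroup E] [Module ℝ E] {ρ : G →* (E ≃ₗ[ℝ] E)}
  {N : Subgroup G}

/-- The orbit map `sN ↦ ρ s u` of a vector `u` fixed by `N`. -/
def cosetOrbit (ρ : G →* (E ≃ₗ[ℝ] E)) (N : Subgroup G) (u : E) (hu : ∀ n ∈ N, ρ n u = u) :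
    G ⧸ N → E :=
  Quotient.lift (fun s => ρ s u) fun s t hst => by
    have hfix := hu _ (QuotientGroup.leftRel_apply.1 hst)
    rw [← mul_inv_cancel_left s t, map_mul, LinearEquiv.mul_apply, hfix]

lemma map_cosetOrbit {u : E} (hu : ∀ n ∈ N, ρ n u = u) (s : G) (c : G ⧸ N) :
    ρ s (cosetOrbit ρ N u hu c) = cosetOrbit ρ N u hu (s • c) := by
  induction c using QuotientGroup.induction_on with
  | H t => exact (LinearEquiv.congr_fun (map_mul ρ s t) u).symm

lemma equivFun_map_eq_cosetRep [Finite (G ⧸ N)] (b : Module.Basis (G ⧸ N) ℝ E)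
    (hb : ∀ s c, ρ s (b c) = b (s • c)) (s : G) (x : E) :
    b.equivFun (ρ s x) = cosetRep G N s (b.equivFun x) := by
  classical
  suffices h : b.equivFun.toLinearMap ∘ₗ (ρ s).toLinearMap =
      (cosetRep G N s).toLinearMap ∘ₗ b.equivFun.toLinearMap from LinearMap.congr_fun h x
  refine b.ext fun c => funext fun d => ?_
  change b.equivFun (ρ s (b c)) d = b.equivFun (b c) (s⁻¹ • d)
  rw [hb, b.equivFun_self, b.equivFun_self]
  simp only [eq_inv_smul_iff]

lemma le_ker_cosetRep (N : Subgroup G) [N.Normal] : N ≤ (cosetRep G N).ker := by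
  intro n hn
  refine LinearEquiv.ext fun f => funext fun c => congrArg f ?_
  induction c using QuotientGroup.induction_on with
  | H s =>
    change ((n⁻¹ * s : G) : G ⧸ N) = s
    rw [QuotientGroup.eq]
    simpa [mul_assoc] using Subgroup.Normal.conj_mem ‹N.Normal› n hn s⁻¹

lemma ker_le_ker_of_intertwines {F : Type*} [AddCommGroup F] [Module ℝ F]
    {θ : G →* (F ≃ₗ[ℝ] F)} (T : E →ₗ[ℝ] F) (hinj : Function.Injective T)
    (hT : ∀ s x, T (ρ s x) = θ s (T x)) : θ.ker ≤ ρ.ker := by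
  intro s hs
  refine LinearEquiv.ext fun x => hinj ?_
  rw [hT, MonoidHom.mem_ker.1 hs]
  rfl

lemma finrank_fun_quotient_eq_index [N.FiniteIndex] : Module.finrank ℝ (G ⧸ N → ℝ) = N.index := by
  have := Fintype.ofFinite (G ⧸ N)
  rw [Module.finrank_fintype_fun_eq_card, Subgroup.index_eq_card, Nat.card_eq_fintype_card]

end CosetRep

theorem stmt18_general {G E : Type*} [Group G] [AddCommGroup E] [Lattice E]
    [IsOrderedAddMonoid E] [Module ℝ E] [IsOrderedModule ℝ E] (harch : RieszArchimedean E)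
    (N : Subgroup G) [N.FiniteIndex] (ρ : G →* (E ≃ₗ[ℝ] E)) (hρ : IsPositiveRep ρ)
    (hirr : BandIrreducible ρ) (hker : N ≤ ρ.ker) (hdim : Module.finrank ℝ E = N.index) :
    ∃ T : E ≃ₗ[ℝ] (G ⧸ N → ℝ),
      (∀ x y : E, x ≤ y ↔ T x ≤ T y) ∧
      ∀ (s : G) (x : E), T (ρ s x) = cosetRep G N s (T x) := by
  have hpos : 0 < Module.finrank ℝ E :=
    hdim ▸ Nat.pos_of_ne_zero Subgroup.FiniteIndex.index_ne_zero
  have := Module.finite_of_finrank_pos hpos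
  have := Module.nontrivial_of_finrank_pos hpos
  have := Fintype.ofFinite (G ⧸ N)
  obtain ⟨u, hu⟩ := exists_isRieszAtom harch
  have hfix : ∀ n ∈ N, ρ n u = u := fun n hn => by rw [MonoidHom.mem_ker.1 (hker hn)]; rfl
  set v := cosetOrbit ρ N u hfix
  have hatom : ∀ c, IsRieszAtom (v c) := fun c => by
    induction c using QuotientGroup.induction_on with
    | H s => exact hu.map hρ s
  have hbot : disjComplementSubmodule (Set.range v) = ⊥ := by
    refine hirr.disjComplementSubmodule_eq_bot hρ ?_ ⟨((1 : G) : G ⧸ N), rfl⟩ (hatom _).pos.ne'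
    rintro s _ ⟨c, rfl⟩
    exact ⟨s • c, (map_cosetOrbit hfix s c).symm⟩
  have hspan := span_eq_top_of_disjComplementSubmodule_eq_bot harch (Set.finite_range v)
    (Set.forall_mem_range.2 hatom) hbot
  have hcard : Fintype.card (G ⧸ N) = Module.finrank ℝ E := by
    rw [hdim, Subgroup.index_eq_card, Nat.card_eq_fintype_card]
  let b := basisOfTopLeSpanOfCardEqFinrank v hspan.ge hcard
  have hb : ⇑b = v := coe_basisOfTopLeSpanOfCardEqFinrank v hspan.ge hcard
  exact ⟨b.equivFun, le_iff_equivFun_le_of_isRieszAtom b (hb ▸ hatom),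
    equivFun_map_eq_cosetRep b (hb ▸ map_cosetOrbit hfix)⟩

/-- A band irreducible positive representation of a finite group `G` in a nonzero
finite dimensional Archimedean Riesz space that is linearly equivalent to `π^N`, for a
normal subgroup `N` of `G`, is in fact order equivalent to `π^N`. -/
theorem stmt18 {G E : Type*} [Group G] [Finite G] [AddCommGroup E] [Lattice E]
    [Module ℝ E] [Nontrivial E] [FiniteDimensional ℝ E]
    (hadd : ∀ x y z : E, x ≤ y → x + z ≤ y + z)
    (hsmul : ∀ (c : ℝ) (x : E), 0 ≤ c → 0 ≤ x → 0 ≤ c • x)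
    (harch : RieszArchimedean E)
    (N : Subgroup G) (hN : N.Normal)
    (ρ : G →* (E ≃ₗ[ℝ] E)) (hρ : IsPositiveRep ρ) (hirr : BandIrreducible ρ)
    (hlin : ∃ T : E ≃ₗ[ℝ] (G ⧸ N → ℝ),
      ∀ (s : G) (x : E), T (ρ s x) = cosetRep G N s (T x)) :
    ∃ T : E ≃ₗ[ℝ] (G ⧸ N → ℝ),
      (∀ x y : E, x ≤ y ↔ T x ≤ T y) ∧
      ∀ (s : G) (x : E), T (ρ s x) = cosetRep G N s (T x) := by
  have : IsOrderedAddMonoid E := { add_le_add_left := fun x y h z => hadd x y z h }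
  have : IsOrderedModule ℝ E := .of_smul_nonneg fun c hc x => hsmul c x hc
  obtain ⟨T, hT⟩ := hlin
  exact stmt18_general harch N ρ hρ hirr
    ((le_ker_cosetRep N).trans (ker_le_ker_of_intertwines T.toLinearMap T.injective hT))
    (T.finrank_eq.trans finrank_fun_quotient_eq_index)
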